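/- arXiv:1108.0531 — 3 statements merged into one kernel-verified Lean document; each statement's English description precedes it below -/
import Mathlib

section
/- (Dicke states are M-states.) Let n ≥ 2 and 1 ≤ k ≤ n−1. On ℂ^{ℤ₂ⁿ}, let α = e^{2πi/n}, let T_k be the diagonal unitary with T_k e_x = α^{|x|−k} e_x where |x| is the Hamming weight of x, and for 1 ≤ i ≤ n−1 let S_i be the permutation matrix that swaps the i-th and (i+1)-st bits of the index: S_i e_x = e_{τ_i(x)} with τ_i exchanging coordinates i and i+1. Then a vector v ∈ ℂ^{ℤ₂ⁿ} satisfies T_k v = v and S_i v = v for all i = 1, …, n−1 if and only if v is a scalar multiple of the Dicke state D^k = ∑_{x : |x| = k} e_x. -/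
open Matrix

/-- Hamming weight of `x ∈ ℤ₂ⁿ`: the number of coordinates equal to `1`. -/
def hammingWt {n : ℕ} (x : Fin n → ZMod 2) : ℕ :=
  (Finset.univ.filter fun i => x i = 1).card

/-- The diagonal unitary `T_k` with `T_k e_x = α^{|x|−k} e_x`, `α = e^{2πi/n}`. -/
noncomputable def Tdiag (n k : ℕ) :
    Matrix (Fin n → ZMod 2) (Fin n → ZMod 2) ℂ :=
  Matrix.diagonal fun x =>
    Complex.exp (2 * Real.pi * Complex.I / n) ^ ((hammingWt x : ℤ) - (k : ℤ))

/-- The permutation matrix `S_i` swapping the `i`-th and `(i+1)`-st bits of the index. -/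
def Sswap (n : ℕ) (i : ℕ) (hi : i + 1 < n) :
    Matrix (Fin n → ZMod 2) (Fin n → ZMod 2) ℂ :=
  Matrix.of fun y z =>
    if y = z ∘ (Equiv.swap (⟨i, Nat.lt_of_succ_lt hi⟩ : Fin n) ⟨i + 1, hi⟩) then 1 else 0

theorem Sswap_mulVec_apply (n i : ℕ) (hi : i + 1 < n) (v : (Fin n → ZMod 2) → ℂ)
    (y : Fin n → ZMod 2) :
    (Sswap n i hi).mulVec v y =
      v (y ∘ (Equiv.swap (⟨i, Nat.lt_of_succ_lt hi⟩ : Fin n) ⟨i + 1, hi⟩)) := by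
  set s := Equiv.swap (⟨i, Nat.lt_of_succ_lt hi⟩ : Fin n) ⟨i + 1, hi⟩ with hs
  have hss : ∀ j, s (s j) = j := fun j => by rw [hs]; exact Equiv.swap_apply_self _ _ _
  have key : ∀ z : Fin n → ZMod 2, (y = z ∘ s) ↔ (z = y ∘ s) := by
    intro z
    constructor
    · rintro rfl
      funext j
      simp [hss]
    · rintro rfl
      funext j
      simp [hss]
  simp only [Sswap, Matrix.mulVec, dotProduct, Matrix.of_apply, ← hs, key]
  simp

theorem hammingWt_comp {n : ℕ} (x : Fin n → ZMod 2) (σ : Equiv.Perm (Fin n)) :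
    hammingWt (x ∘ σ) = hammingWt x := by
  unfold hammingWt
  refine Finset.card_bij (fun i _ => σ i) ?_ ?_ ?_
  · intro i hi
    simpa using hi
  · intro a _ b _ h
    exact σ.injective h
  · intro b hb
    exact ⟨σ.symm b, by simpa using hb, by simp⟩

theorem exists_perm_of_hammingWt_eq {n : ℕ} (x y : Fin n → ZMod 2)
    (h : hammingWt x = hammingWt y) : ∃ σ : Equiv.Perm (Fin n), x = y ∘ σ := by
  have hc : Fintype.card {i // x i = 1} = Fintype.card {i // y i = 1} := by
    rw [Fintype.card_subtype, Fintype.card_subtype]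
    exact h
  let e := Fintype.equivOfCardEq hc
  refine ⟨e.extendSubtype, ?_⟩
  have h01 : ∀ a : ZMod 2, a ≠ 1 → a = 0 := by decide
  funext i
  by_cases hx : x i = 1
  · have := e.extendSubtype_mem i hx
    simp [hx, this]
  · have := e.extendSubtype_not_mem i hx
    simp [h01 _ hx, h01 _ this]

theorem perm_invariant {n : ℕ} (v : (Fin n → ZMod 2) → ℂ)
    (h : ∀ (i : ℕ) (hi : i + 1 < n), (Sswap n i hi).mulVec v = v)
    (σ : Equiv.Perm (Fin n)) : ∀ x, v (x ∘ σ) = v x := by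
  cases n with
  | zero => intro x; congr 1; exact Subsingleton.elim _ _
  | succ m =>
    have hσ : σ ∈ Submonoid.closure
        (Set.range fun i : Fin m => Equiv.swap i.castSucc i.succ) := by
      rw [Equiv.Perm.mclosure_swap_castSucc_succ]; trivial
    induction hσ using Submonoid.closure_induction with
    | mem s hs =>
      obtain ⟨i, rfl⟩ := hs
      intro x
      have := congrFun (h i.1 (by omega)) x
      rw [Sswap_mulVec_apply] at this
      exact this
    | one => intro x; rfl
    | mul a b _ _ ha hb =>
      intro x
      have : x ∘ (a * b : Equiv.Perm _) = (x ∘ a) ∘ b := rfl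
      rw [this, hb, ha]

theorem dicke_is_Mstate (n k : ℕ) (hn : 2 ≤ n) (hk1 : 1 ≤ k) (hk2 : k ≤ n - 1)
    (v : (Fin n → ZMod 2) → ℂ) :
    ((Tdiag n k).mulVec v = v ∧
      ∀ (i : ℕ) (hi : i + 1 < n), (Sswap n i hi).mulVec v = v) ↔
    ∃ c : ℂ, v = c • fun x => if hammingWt x = k then (1 : ℂ) else 0 := by
  constructor
  · rintro ⟨hT, hS⟩
    have hzero : ∀ x, hammingWt x ≠ k → v x = 0 := by
      intro x hx
      by_contra hv
      have h1 := congrFun hT x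
      rw [Tdiag, Matrix.mulVec_diagonal] at h1
      have h2 := (mul_eq_right₀ hv).1 h1
      have hp := Complex.isPrimitiveRoot_exp n (by omega)
      rw [hp.zpow_eq_one_iff_dvd] at h2
      have hle : hammingWt x ≤ n := by
        have := Finset.card_le_univ (Finset.univ.filter fun i => x i = 1)
        simpa [hammingWt] using this
      have h3 : ((hammingWt x : ℤ) - k) = 0 := by
        apply Int.eq_zero_of_abs_lt_dvd h2
        rw [abs_lt]
        constructor <;> omega
      omega
    by_cases hex : ∃ x₀ : Fin n → ZMod 2, hammingWt x₀ = k
    · obtain ⟨x₀, hx₀⟩ := hex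
      refine ⟨v x₀, ?_⟩
      funext x
      by_cases hx : hammingWt x = k
      · obtain ⟨σ, rfl⟩ := exists_perm_of_hammingWt_eq x x₀ (hx.trans hx₀.symm)
        simp [hx, perm_invariant v hS σ x₀]
      · simp [hx, hzero x hx]
    · refine ⟨0, ?_⟩
      funext x
      simp [hzero x (fun hx => hex ⟨x, hx⟩)]
  · rintro ⟨c, rfl⟩
    constructor
    · funext x
      rw [Tdiag, Matrix.mulVec_diagonal]
      by_cases hx : hammingWt x = k
      · simp [hx]
      · simp [hx]
    · intro i hi
      funext x
      rw [Sswap_mulVec_apply]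
      simp [hammingWt_comp]
end

section
/- (Coset states of finite abelian groups are M-states.) Let G be a finite abelian (additive) group, H ≤ G a subgroup, and x₀ ∈ G. On the Hilbert space ℂ^G with basis {e_g : g ∈ G}, define for h ∈ G the translation operator X(h) by X(h) e_g = e_{g+h}, and for an additive character χ : G → ℂˣ the diagonal operator Z(χ) by Z(χ) e_g = χ(g) e_g. Then a vector v ∈ ℂ^G satisfies X(h) v = v for all h ∈ H and χ(x₀)⁻¹ · Z(χ) v = v for every character χ of G that is trivial on H, if and only if v is a scalar multiple of the coset state |H + x₀⟩ = ∑_{h∈H} e_{x₀+h}. -/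
open Matrix

/-- **coset states of finite abelian groups are M-states.** Let `G` be a
finite abelian group, `H ≤ G` and `x₀ ∈ G`. A vector `v ∈ ℂ^G` satisfies `X(h) v = v` for
all `h ∈ H` and `χ(x₀)⁻¹ Z(χ) v = v` for every character `χ` of `G` trivial on `H`, iff
`v` is a scalar multiple of the coset state `|H + x₀⟩ = ∑_{h ∈ H} e_{x₀+h}`. -/
theorem coset_state_is_Mstate (G : Type*) [AddCommGroup G] [Fintype G] [DecidableEq G]
    (H : AddSubgroup G) [DecidablePred (· ∈ H)] (x₀ : G) (v : G → ℂ) :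
    ((∀ h ∈ H,
        (Matrix.of fun g g' : G => if g = g' + h then (1 : ℂ) else 0).mulVec v = v) ∧
      (∀ χ : AddChar G ℂ, (∀ h ∈ H, χ h = 1) →
        (χ x₀)⁻¹ • (Matrix.diagonal fun g : G => χ g).mulVec v = v)) ↔
    ∃ c : ℂ, v = c • fun g : G => if g - x₀ ∈ H then (1 : ℂ) else 0 := by
  have hX : ∀ (h : G) (w : G → ℂ) (g : G),
      (Matrix.of fun g g' : G => if g = g' + h then (1 : ℂ) else 0).mulVec w g = w (g - h) := by
    intro h w g
    simp only [Matrix.mulVec, dotProduct, Matrix.of_apply]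
    rw [Finset.sum_eq_single (g - h)]
    · simp
    · intro b _ hb
      rw [if_neg, zero_mul]
      intro hg
      exact hb (by rw [hg]; abel)
    · simp
  have hne : ∀ (χ : AddChar G ℂ) (g : G), χ g ≠ 0 := fun χ g hg => by
    have h1 : χ (g + -g) = 1 := by simp
    rw [AddChar.map_add_eq_mul, hg, zero_mul] at h1
    exact zero_ne_one h1
  constructor
  · rintro ⟨h1, h2⟩
    refine ⟨v x₀, ?_⟩
    funext g
    simp only [Pi.smul_apply, smul_eq_mul]
    split_ifs with hg
    · have h3 := congrFun (h1 _ hg) g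
      rw [hX, sub_sub_cancel] at h3
      rw [mul_one, h3]
    · rw [mul_zero]
      haveI : Finite (G ⧸ H) := Quotient.finite _
      have hq : (QuotientAddGroup.mk' H (g - x₀)) ≠ 0 := by
        intro h
        exact hg ((QuotientAddGroup.eq_zero_iff _).1 h)
      obtain ⟨ψ, hψ⟩ := AddChar.exists_apply_ne_zero.2 hq
      let χ : AddChar G ℂ := ψ.compAddMonoidHom (QuotientAddGroup.mk' H)
      have hχ : ∀ h ∈ H, χ h = 1 := by
        intro h hh
        have h0 : QuotientAddGroup.mk' H h = 0 := (QuotientAddGroup.eq_zero_iff _).2 hh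
        change ψ (QuotientAddGroup.mk' H h) = 1
        rw [h0, AddChar.map_zero_eq_one]
      have hψ' : χ (g - x₀) ≠ 1 := hψ
      have h3 := congrFun (h2 χ hχ) g
      simp only [Pi.smul_apply, smul_eq_mul, Matrix.mulVec_diagonal] at h3
      by_contra hv
      apply hψ'
      have h4 : χ g = χ (g - x₀) * χ x₀ := by
        rw [← AddChar.map_add_eq_mul, sub_add_cancel]
      rw [h4] at h3
      have h5 : χ (g - x₀) * v g = 1 * v g := by
        rw [one_mul]
        nth_rewrite 2 [← h3]
        field_simp [hne χ x₀]
      exact mul_right_cancel₀ hv h5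
  · rintro ⟨c, rfl⟩
    constructor
    · intro h hh
      funext g
      rw [hX]
      have : g - h - x₀ ∈ H ↔ g - x₀ ∈ H := by
        rw [sub_right_comm]
        exact ⟨fun h' => by simpa using H.add_mem h' hh, fun h' => H.sub_mem h' hh⟩
      simp only [Pi.smul_apply, this]
    · intro χ hχ
      funext g
      simp only [Pi.smul_apply, smul_eq_mul, Matrix.mulVec_diagonal]
      split_ifs with hg
      · have h4 : χ g = χ x₀ := by
          rw [← sub_add_cancel g x₀, AddChar.map_add_eq_mul, hχ _ hg, one_mul]
        rw [h4, inv_mul_cancel_left₀ (hne χ x₀)]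
      · simp
end

section
/- (Two-site AKLT stabilizer.) On ℂ³ ⊗ ℂ³ with orthonormal basis {|a b⟩ : a, b ∈ {0,1,2}}, let U be the monomial unitary operator defined by U|01⟩ = −|10⟩, U|10⟩ = −|01⟩, U|02⟩ = −|20⟩, U|20⟩ = −|02⟩, U|12⟩ = −|21⟩, U|21⟩ = −|12⟩, U|00⟩ = |11⟩, U|11⟩ = |22⟩, U|22⟩ = |00⟩. Then the +1 eigenspace {v : U v = v} of U equals the four-dimensional subspace spanned by ψ₁ = |01⟩ − |10⟩, ψ₂ = |02⟩ − |20⟩, ψ₃ = |12⟩ − |21⟩, and ψ₄ = |00⟩ + |11⟩ + |22⟩. -/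
open Matrix

/-- The image basis label of the two-site AKLT stabilizer `U`:
`(0,1) ↔ (1,0)`, `(0,2) ↔ (2,0)`, `(1,2) ↔ (2,1)`, `(0,0) → (1,1) → (2,2) → (0,0)`. -/
def akltTarget : Fin 3 × Fin 3 → Fin 3 × Fin 3 := fun c =>
  if c = (0, 1) then (1, 0)
  else if c = (1, 0) then (0, 1)
  else if c = (0, 2) then (2, 0)
  else if c = (2, 0) then (0, 2)
  else if c = (1, 2) then (2, 1)
  else if c = (2, 1) then (1, 2)
  else if c = (0, 0) then (1, 1)
  else if c = (1, 1) then (2, 2)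
  else (0, 0)

/-- The sign of the two-site AKLT stabilizer `U`: `+1` on `(0,0), (1,1), (2,2)` and `−1`
on the six off-diagonal basis states. -/
def akltSign : Fin 3 × Fin 3 → ℂ := fun c =>
  if c = (0, 0) ∨ c = (1, 1) ∨ c = (2, 2) then 1 else -1

/-- The monomial unitary operator `U` on `ℂ³ ⊗ ℂ³` with `U|01⟩ = −|10⟩`, `U|10⟩ = −|01⟩`,
`U|02⟩ = −|20⟩`, `U|20⟩ = −|02⟩`, `U|12⟩ = −|21⟩`, `U|21⟩ = −|12⟩`, `U|00⟩ = |11⟩`,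
`U|11⟩ = |22⟩`, `U|22⟩ = |00⟩`. -/
def akltU : Matrix (Fin 3 × Fin 3) (Fin 3 × Fin 3) ℂ :=
  Matrix.of fun r c => if r = akltTarget c then akltSign c else 0

/-- The two-site basis state `|a b⟩`. -/
def ket (a b : Fin 3) : (Fin 3 × Fin 3) → ℂ := Pi.single (a, b) 1

/-- `ψ₁ = |01⟩ − |10⟩`. -/
noncomputable def akltPsi1 : (Fin 3 × Fin 3) → ℂ := ket 0 1 - ket 1 0
/-- `ψ₂ = |02⟩ − |20⟩`. -/
noncomputable def akltPsi2 : (Fin 3 × Fin 3) → ℂ := ket 0 2 - ket 2 0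
/-- `ψ₃ = |12⟩ − |21⟩`. -/
noncomputable def akltPsi3 : (Fin 3 × Fin 3) → ℂ := ket 1 2 - ket 2 1
/-- `ψ₄ = |00⟩ + |11⟩ + |22⟩`. -/
noncomputable def akltPsi4 : (Fin 3 × Fin 3) → ℂ := ket 0 0 + ket 1 1 + ket 2 2

theorem aklt_mem_span (v : Fin 3 × Fin 3 → ℂ) :
    v ∈ Submodule.span ℂ ({akltPsi1, akltPsi2, akltPsi3, akltPsi4} :
        Set ((Fin 3 × Fin 3) → ℂ)) ↔
    ∃ a b c d : ℂ, v = a • akltPsi1 + (b • akltPsi2 + (c • akltPsi3 + d • akltPsi4)) := by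
  simp only [Submodule.mem_span_insert, Submodule.mem_span_singleton]
  constructor
  · rintro ⟨a, _, ⟨b, _, ⟨c, _, ⟨d, rfl⟩, rfl⟩, rfl⟩, rfl⟩
    exact ⟨a, b, c, d, rfl⟩
  · rintro ⟨a, b, c, d, rfl⟩
    exact ⟨a, _, ⟨b, _, ⟨c, _, ⟨d, rfl⟩, rfl⟩, rfl⟩, rfl⟩

theorem aklt_comb (a b c d : ℂ) (i j : Fin 3) :
    (a • akltPsi1 + (b • akltPsi2 + (c • akltPsi3 + d • akltPsi4))) (i, j) =
      (!![d, a, b; -a, d, c; -b, -c, d] : Matrix (Fin 3) (Fin 3) ℂ) i j := by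
  fin_cases i <;> fin_cases j <;>
    simp [akltPsi1, akltPsi2, akltPsi3, akltPsi4, ket, Pi.single_apply]

theorem aklt_mulVec (v : Fin 3 × Fin 3 → ℂ) (i j : Fin 3) :
    akltU.mulVec v (i, j) =
      (!![v (2, 2), -v (1, 0), -v (2, 0); -v (0, 1), v (0, 0), -v (2, 1);
        -v (0, 2), -v (1, 2), v (1, 1)] : Matrix (Fin 3) (Fin 3) ℂ) i j := by
  fin_cases i <;> fin_cases j <;>
    simp [Matrix.mulVec, dotProduct, Fintype.sum_prod_type, Fin.sum_univ_three, akltU,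
      akltTarget, akltSign]

theorem aklt_linearIndependent :
    LinearIndependent ℂ ![akltPsi1, akltPsi2, akltPsi3, akltPsi4] := by
  rw [Fintype.linearIndependent_iff]
  intro g hg
  have h : g 0 • akltPsi1 + (g 1 • akltPsi2 + (g 2 • akltPsi3 + g 3 • akltPsi4)) = 0 := by
    rw [← hg]
    simp [Fin.sum_univ_four, add_assoc]
  have key : ∀ i j, _ := fun i j => (aklt_comb (g 0) (g 1) (g 2) (g 3) i j).symm.trans
    (congrFun h (i, j))
  have h0 := key 0 1
  have h1 := key 0 2
  have h2 := key 1 2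
  have h3 := key 0 0
  simp at h0 h1 h2 h3
  intro i
  fin_cases i <;> assumption

/-- **two-site AKLT stabilizer.** The `+1` eigenspace of `U` equals the
four-dimensional subspace spanned by `ψ₁ = |01⟩ − |10⟩`, `ψ₂ = |02⟩ − |20⟩`,
`ψ₃ = |12⟩ − |21⟩` and `ψ₄ = |00⟩ + |11⟩ + |22⟩`. -/
theorem aklt_two_site_stabilizer :
    {v : Fin 3 × Fin 3 → ℂ | akltU.mulVec v = v} =
      (Submodule.span ℂ {akltPsi1, akltPsi2, akltPsi3, akltPsi4} :
        Set ((Fin 3 × Fin 3) → ℂ)) ∧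
    Module.finrank ℂ
      (Submodule.span ℂ ({akltPsi1, akltPsi2, akltPsi3, akltPsi4} :
        Set ((Fin 3 × Fin 3) → ℂ))) = 4 := by
  constructor
  · ext v
    rw [SetLike.mem_coe, aklt_mem_span, Set.mem_setOf_eq]
    constructor
    · intro h
      have key : ∀ i j, _ := fun i j => (aklt_mulVec v i j).symm.trans (congrFun h (i, j))
      have h10 := key 1 0
      have h20 := key 2 0
      have h21 := key 2 1
      have h00 := key 0 0
      have h11 := key 1 1
      simp at h10 h20 h21 h00 h11
      refine ⟨v (0, 1), v (0, 2), v (1, 2), v (0, 0), ?_⟩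
      ext ⟨i, j⟩
      rw [aklt_comb]
      fin_cases i <;> fin_cases j <;> simp [h10, h20, h21, h00, h11]
    · rintro ⟨a, b, c, d, rfl⟩
      ext ⟨i, j⟩
      rw [aklt_mulVec]
      simp only [aklt_comb]
      fin_cases i <;> fin_cases j <;> simp
  · have h := finrank_span_eq_card aklt_linearIndependent
    have hr : Set.range ![akltPsi1, akltPsi2, akltPsi3, akltPsi4] =
        {akltPsi1, akltPsi2, akltPsi3, akltPsi4} := by
      simp only [Matrix.range_cons, Matrix.range_empty, Set.union_empty, Set.singleton_union]
    rw [hr] at h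
    simpa using h
end
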